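/- Let a, b be integers with (a,b) ≠ (0,0), let p be an odd prime that is a 0-Pisano-Legendre prime relative to (a,b) with p ≡ ±1 (mod 8), let q ≥ 1 be an integer, and let G be a connected graph. Then the cartesian product graph C_{qπ_p(a,b)} □ G is an (a,b)-Fibonacci-Legendre cordial graph modulo p. -/

import Mathlib

/-!
Write `n = q π_p(a,b)` and label the vertex `(i, v)` of `C_n □ G` by `i + n k`, where `k` is the
index of `v` in an enumeration of `G`. As `n` is a multiple of the period, this vertex carries the
residue `F_i` modulo `p`. The edges of the product are then of two kinds.

* Over an edge of `G`, the copy at height `i` has vertex sum `2 F_i`, and `2` is a square modulo `p`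
  because `p ≡ ±1 (mod 8)`; so its label is decided by `(F_i / p)` (`labelSign_two_mul`).
* Over a vertex of `G`, the cycle edge from `i` to its successor has vertex sum
  `F_i + F_{i+1} = F_{i+2}`, also at the closing edge by periodicity.

In both cases `i` runs once through `n` consecutive indices, and over these the labels `1` and `0`
are equally frequent because `p` is a `0`-PL prime (`sum_labelSign_mul`). Hence `e(0) = e(1)`.

The parametrization of the edges (`prodEdge`) is injective only for `n ≥ 3`; shorter periods are
incompatible with the `0`-PL condition (`three_le_pisanoAB`).
-/

noncomputable section

/-- The `(a,b)`-Fibonacci sequence: `F 0 = a`, `F 1 = b`, `F (n+2) = F n + F (n+1)`. -/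
def fibAB (a b : ℤ) : ℕ → ℤ
  | 0 => a
  | 1 => b
  | n + 2 => fibAB a b n + fibAB a b (n + 1)

/-- The `(a,b)`-Pisano period of `p`: the least positive `k` with
`F (n + k) ≡ F n (mod p)` for all `n`. -/
def pisanoAB (a b : ℤ) (p : ℕ) : ℕ :=
  sInf {k : ℕ | 0 < k ∧ ∀ n : ℕ, fibAB a b (n + k) ≡ fibAB a b n [ZMOD (p : ℤ)]}

/-- `Λ_j^p(a,b)`: the indices `ξ ∈ {0, …, π_p(a,b) - 1}` with `(F_ξ / p) = j`,
where (for odd prime `p`) the Legendre symbol is given by `jacobiSym`. -/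
def LambdaSet (a b : ℤ) (p : ℕ) (j : ℤ) : Finset ℕ :=
  (Finset.range (pisanoAB a b p)).filter fun ξ => jacobiSym (fibAB a b ξ) p = j

/-- `p` is a `k`-Pisano–Legendre prime relative to `(a,b)`. -/
def IsPLPrime (a b : ℤ) (p : ℕ) (k : ℤ) : Prop :=
  k = ((LambdaSet a b p 1).card : ℤ) - ((LambdaSet a b p (-1)).card : ℤ)
      - ((LambdaSet a b p 0).card : ℤ)

/-- `χ(a,b)`: the set of integers `k` for which some odd prime is a `k`-PL prime
relative to `(a,b)`. -/
def chiSet (a b : ℤ) : Set ℤ :=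
  {k | ∃ p : ℕ, p.Prime ∧ Odd p ∧ IsPLPrime a b p k}

/-- The order of apparition `z(p)` of `p` in the classical Fibonacci sequence. -/
def apparition (p : ℕ) : ℕ :=
  sInf {n : ℕ | 0 < n ∧ (p : ℤ) ∣ fibAB 0 1 n}

/-- The induced edge label `f_p*` on an unordered pair of vertex labels. -/
def flcEdgeLabel (a b : ℤ) (p : ℕ) : Sym2 ℕ → ℕ :=
  Sym2.lift ⟨fun x y =>
    if (p : ℤ) ∣ (fibAB a b x + fibAB a b y) then 0
    else (1 + jacobiSym (fibAB a b x + fibAB a b y) p).toNat / 2,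
    fun x y => by dsimp only; rw [add_comm (fibAB a b x) (fibAB a b y)]⟩

/-- The number of edges of `G` receiving label `i` under the vertex labeling `f`. -/
def flcCount {V : Type*} (G : SimpleGraph V) (a b : ℤ) (p : ℕ) (f : V → ℕ) (i : ℕ) : ℕ :=
  {e ∈ G.edgeSet | flcEdgeLabel a b p (e.map f) = i}.ncard

/-- `G` is an `(a,b)`-Fibonacci–Legendre cordial graph modulo `p`: there is a bijective
vertex labeling by `{0, …, |V| - 1}` with `|e(0) - e(1)| ≤ 1`. -/
def IsFLCGraph {V : Type*} [Fintype V] (G : SimpleGraph V) (a b : ℤ) (p : ℕ) : Prop :=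
  ∃ f : V ≃ Fin (Fintype.card V),
    |(flcCount G a b p (fun v => ((f v : Fin (Fintype.card V)) : ℕ)) 0 : ℤ) -
      (flcCount G a b p (fun v => ((f v : Fin (Fintype.card V)) : ℕ)) 1 : ℤ)| ≤ 1

/-- The path graph on `n` vertices. -/
def pathG (n : ℕ) : SimpleGraph (Fin n) :=
  SimpleGraph.fromRel fun i j => (i : ℕ) + 1 = (j : ℕ)

/-- The cycle graph on `n` vertices: the path graph plus the edge between the
first and last vertex. -/
def cycleG (n : ℕ) : SimpleGraph (Fin n) :=
  SimpleGraph.fromRel fun i j => (i : ℕ) + 1 = (j : ℕ) ∨ ((i : ℕ) = 0 ∧ (j : ℕ) = n - 1)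

/-- The star graph on `n` vertices with central vertex `0`. -/
def starG (n : ℕ) : SimpleGraph (Fin n) :=
  SimpleGraph.fromRel fun i _ => (i : ℕ) = 0

/-- The wheel graph on `n` vertices: hub `0` joined to every vertex of the cycle on
`1, …, n-1`. -/
def wheelG (n : ℕ) : SimpleGraph (Fin n) :=
  SimpleGraph.fromRel fun i j =>
    (i : ℕ) = 0 ∨ (i : ℕ) + 1 = (j : ℕ) ∨ ((i : ℕ) = 1 ∧ (j : ℕ) = n - 1)

/-- Lexicographic product of graphs. -/
def lexProd {α β : Type*} (G : SimpleGraph α) (H : SimpleGraph β) : SimpleGraph (α × β) :=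
  SimpleGraph.fromRel fun x y => G.Adj x.1 y.1 ∨ (x.1 = y.1 ∧ H.Adj x.2 y.2)

/-- Cartesian product of graphs. -/
def cartProd {α β : Type*} (G : SimpleGraph α) (H : SimpleGraph β) : SimpleGraph (α × β) :=
  SimpleGraph.fromRel fun x y => (x.1 = y.1 ∧ H.Adj x.2 y.2) ∨ (x.2 = y.2 ∧ G.Adj x.1 y.1)

/-- Tensor product of graphs. -/
def tensorProd {α β : Type*} (G : SimpleGraph α) (H : SimpleGraph β) : SimpleGraph (α × β) :=
  SimpleGraph.fromRel fun x y => G.Adj x.1 y.1 ∧ H.Adj x.2 y.2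

/-- Strong product of graphs: union of the cartesian and tensor products. -/
def strongProd {α β : Type*} (G : SimpleGraph α) (H : SimpleGraph β) : SimpleGraph (α × β) :=
  cartProd G H ⊔ tensorProd G H

/-- Join of two graphs: both graphs together with all edges between them. -/
def joinG {α β : Type*} (G : SimpleGraph α) (H : SimpleGraph β) : SimpleGraph (α ⊕ β) :=
  SimpleGraph.fromRel fun x y =>
    match x, y with
    | Sum.inl u, Sum.inl v => G.Adj u v
    | Sum.inr u, Sum.inr v => H.Adj u v
    | Sum.inl _, Sum.inr _ => True
    | Sum.inr _, Sum.inl _ => True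

/-- Corona `G ∘ H`: one copy of `G`, a copy of `H` for each vertex of `G`, and the
`u`-th vertex of `G` joined to every vertex of the `u`-th copy of `H`. -/
def coronaG {α β : Type*} (G : SimpleGraph α) (H : SimpleGraph β) :
    SimpleGraph (α ⊕ α × β) :=
  SimpleGraph.fromRel fun x y =>
    match x, y with
    | Sum.inl u, Sum.inl v => G.Adj u v
    | Sum.inr (u, s), Sum.inr (v, t) => u = v ∧ H.Adj s t
    | Sum.inl u, Sum.inr (v, _) => u = v
    | Sum.inr (u, _), Sum.inl v => u = v

/-- Disjoint union of a family of graphs on a common vertex type. -/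
def unionFam {ι V : Type*} (Gs : ι → SimpleGraph V) : SimpleGraph (ι × V) :=
  SimpleGraph.fromRel fun x y => x.1 = y.1 ∧ (Gs x.1).Adj x.2 y.2

/-- The sign of the label produced by a vertex sum `t`: `1` when `t` is a nonzero square modulo `p`
(label `1`), and `-1` otherwise (label `0`). -/
def labelSign (p : ℕ) (t : ℤ) : ℤ := if jacobiSym t p = 1 then 1 else -1

lemma labelSign_congr {p : ℕ} {s t : ℤ} (h : s ≡ t [ZMOD (p : ℤ)]) :
    labelSign p s = labelSign p t := by
  unfold labelSign
  rw [jacobiSym.mod_left s, jacobiSym.mod_left t, h]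

lemma labelSign_two_mul {p : ℕ} (hodd : Odd p) (h8 : p % 8 = 1 ∨ p % 8 = 7) (t : ℤ) :
    labelSign p (2 * t) = labelSign p t := by
  have h2 : jacobiSym 2 p = 1 := by
    rw [jacobiSym.at_two hodd, ZMod.χ₈_nat_eq_if_mod_eight]
    rcases h8 with h | h <;> simp [h] <;> omega
  unfold labelSign
  rw [jacobiSym.mul_left, h2, one_mul]

/-- Labels are `1` or `0` according to whether the vertex sum is a nonzero square modulo `p`; a
vertex sum divisible by `p` has Jacobi symbol `0`, so the two branches of the definition merge. -/
lemma flcEdgeLabel_mk (a b : ℤ) {p : ℕ} (hp : p.Prime) (x y : ℕ) :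
    flcEdgeLabel a b p s(x, y) = if jacobiSym (fibAB a b x + fibAB a b y) p = 1 then 1 else 0 := by
  simp only [flcEdgeLabel, Sym2.lift_mk]
  generalize fibAB a b x + fibAB a b y = t
  split_ifs with h1 h2 h2
  · exfalso
    have : jacobiSym t p = 0 := by
      have : NeZero p := ⟨hp.ne_zero⟩
      rw [jacobiSym.eq_zero_iff_not_coprime]
      intro h
      have h3 : (p : ℤ) ∣ (t.gcd p : ℤ) := Int.dvd_coe_gcd h1 dvd_rfl
      rw [h] at h3
      exact hp.one_lt.ne' (by exact_mod_cast Int.eq_one_of_dvd_one (by positivity) h3)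
    omega
  · rfl
  · rw [h2]; rfl
  · rcases jacobiSym.trichotomy t p with h | h | h
    · rw [h]; rfl
    · exact absurd h h2
    · rw [h]; rfl

/-- The difference `e(1) - e(0)` is the sum of the signs of the edges, for any parametrization `φ`
of the edge set by a finite type. -/
lemma flcCount_sub {W Z : Type*} [Fintype Z] (H : SimpleGraph W) (a b : ℤ) {p : ℕ}
    (f : W → ℕ) (φ : Z → Sym2 W) (hinj : Function.Injective φ)
    (hrange : Set.range φ = H.edgeSet) (g : Z → ℤ)
    (hg : ∀ z, (flcEdgeLabel a b p ((φ z).map f) = 1 ∧ g z = 1) ∨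
      (flcEdgeLabel a b p ((φ z).map f) = 0 ∧ g z = -1)) :
    (flcCount H a b p f 1 : ℤ) - flcCount H a b p f 0 = ∑ z, g z := by
  classical
  have key : ∀ k, (flcCount H a b p f k : ℤ) =
      ∑ z, if flcEdgeLabel a b p ((φ z).map f) = k then (1 : ℤ) else 0 := by
    intro k
    have hset : {e ∈ H.edgeSet | flcEdgeLabel a b p (e.map f) = k} =
        φ '' {z | flcEdgeLabel a b p ((φ z).map f) = k} := by
      rw [← hrange]; ext e; simp only [Set.mem_ofPred_eq, Set.mem_range, Set.mem_image]
      constructor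
      · rintro ⟨⟨z, rfl⟩, h⟩; exact ⟨z, h, rfl⟩
      · rintro ⟨z, h, rfl⟩; exact ⟨⟨z, rfl⟩, h⟩
    rw [flcCount, hset, Set.ncard_image_of_injective _ hinj, Finset.sum_boole,
      Set.ncard_eq_toFinset_card', Set.toFinset_ofPred]
  rw [key, key, ← Finset.sum_sub_distrib]
  refine Finset.sum_congr rfl fun z _ => ?_
  rcases hg z with ⟨h1, h2⟩ | ⟨h1, h2⟩ <;> simp [h1, h2]

lemma fibAB_period {a b : ℤ} {p : ℕ} (h : pisanoAB a b p ≠ 0) (n : ℕ) :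
    fibAB a b (n + pisanoAB a b p) ≡ fibAB a b n [ZMOD (p : ℤ)] := by
  have hne : {k : ℕ | 0 < k ∧ ∀ n : ℕ, fibAB a b (n + k) ≡ fibAB a b n [ZMOD (p : ℤ)]}.Nonempty := by
    by_contra hc
    rw [Set.not_nonempty_iff_eq_empty] at hc
    exact h (by rw [pisanoAB, hc, Nat.sInf_empty])
  exact (Nat.sInf_mem hne).2 n

lemma fibAB_period_mul {a b : ℤ} {p : ℕ} (h : pisanoAB a b p ≠ 0) (n k : ℕ) :
    fibAB a b (n + k * pisanoAB a b p) ≡ fibAB a b n [ZMOD (p : ℤ)] := by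
  induction k with
  | zero => simp [Int.ModEq.refl]
  | succ k ih =>
    rw [Nat.succ_mul, ← add_assoc]
    exact (fibAB_period h _).trans ih

lemma sum_labelSign_period {a b : ℤ} {p : ℕ} (hPL : IsPLPrime a b p 0) :
    ∑ i ∈ Finset.range (pisanoAB a b p), labelSign p (fibAB a b i) = 0 := by
  rw [IsPLPrime, LambdaSet, LambdaSet, LambdaSet, Finset.natCast_card_filter,
    Finset.natCast_card_filter, Finset.natCast_card_filter, ← Finset.sum_sub_distrib,
    ← Finset.sum_sub_distrib] at hPL
  rw [hPL]
  refine Finset.sum_congr rfl fun i _ => ?_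
  rcases jacobiSym.trichotomy (fibAB a b i) p with h | h | h <;> simp [labelSign, h]

lemma sum_labelSign_mul {a b : ℤ} {p : ℕ} (h : pisanoAB a b p ≠ 0) (hPL : IsPLPrime a b p 0)
    (q : ℕ) :
    ∑ i ∈ Finset.range (q * pisanoAB a b p), labelSign p (fibAB a b i) = 0 := by
  induction q with
  | zero => simp
  | succ q ih =>
    rw [Nat.succ_mul, Finset.sum_range_add, ih, zero_add, ← sum_labelSign_period hPL]
    refine Finset.sum_congr rfl fun i _ => ?_
    rw [add_comm]
    exact labelSign_congr (fibAB_period_mul h i q)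

/-- Sums over a full period are unchanged by shifting the index. -/
lemma sum_range_add_of_periodic {n : ℕ} (g : ℕ → ℤ) (hg : ∀ i, g (i + n) = g i) (k : ℕ) :
    ∑ i ∈ Finset.range n, g (i + k) = ∑ i ∈ Finset.range n, g i := by
  induction k with
  | zero => rfl
  | succ k ih =>
    rw [← ih]
    have h1 := Finset.sum_range_succ (fun i => g (i + k)) n
    have h2 := Finset.sum_range_succ' (fun i => g (i + k)) n
    have h3 : g (n + k) = g (0 + k) := by rw [add_comm, hg, zero_add]
    have h4 : ∀ i, g (i + 1 + k) = g (i + (k + 1)) := fun i => by congr 1; omega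
    simp only [h4] at h2
    linarith

/-- A positive period over which the signs cancel has length at least `3`: a
single sign is nonzero, and period `2` would force `F` to vanish modulo `p`. -/
lemma three_le_pisanoAB {a b : ℤ} {p : ℕ} (h : pisanoAB a b p ≠ 0) (hPL : IsPLPrime a b p 0) :
    3 ≤ pisanoAB a b p := by
  by_contra hlt
  have hs := sum_labelSign_period hPL
  have hper := fibAB_period (a := a) (b := b) (p := p) h
  have h12 : pisanoAB a b p = 1 ∨ pisanoAB a b p = 2 := by omega
  rcases h12 with h1 | h2
  · rw [h1, Finset.sum_range_one, labelSign] at hs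
    split_ifs at hs <;> omega
  · have hle : pisanoAB a b p ≤ 1 := by
      have e0 := hper 0
      have e1 := hper 1
      rw [h2] at e0 e1
      simp only [fibAB] at e0 e1
      have hb : b ≡ 0 [ZMOD (p : ℤ)] := by
        simpa using Int.ModEq.add_left_cancel' a (by simpa using e0 : a + b ≡ a + 0 [ZMOD (p : ℤ)])
      have ha : a ≡ 0 [ZMOD (p : ℤ)] := by
        have : (a + b) ≡ 0 [ZMOD (p : ℤ)] := by
          exact Int.ModEq.add_left_cancel' b (by simpa [fibAB] using e1)
        exact (by simpa using e0.symm.trans this)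
      have hz : ∀ n, fibAB a b n ≡ 0 [ZMOD (p : ℤ)] ∧ fibAB a b (n + 1) ≡ 0 [ZMOD (p : ℤ)] := by
        intro n
        induction n with
        | zero => exact ⟨ha, hb⟩
        | succ n ih => exact ⟨ih.2, by simpa [fibAB] using ih.1.add ih.2⟩
      exact Nat.sInf_le ⟨one_pos, fun n => (hz n).2.trans (hz n).1.symm⟩
    omega

/-- The cyclic successor on `Fin n`. -/
def cycNext {n : ℕ} (i : Fin n) : Fin n :=
  ⟨((i : ℕ) + 1) % n, Nat.mod_lt _ (Nat.zero_lt_of_lt i.isLt)⟩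

lemma cycNext_val {n : ℕ} (i : Fin n) :
    ((i : ℕ) + 1 < n ∧ (cycNext i : ℕ) = i + 1) ∨ ((i : ℕ) + 1 = n ∧ (cycNext i : ℕ) = 0) := by
  have hi := i.isLt
  rcases Nat.lt_or_ge ((i : ℕ) + 1) n with h | h
  · exact Or.inl ⟨h, Nat.mod_eq_of_lt h⟩
  · have h' : (i : ℕ) + 1 = n := by omega
    exact Or.inr ⟨h', by simp [cycNext, h']⟩

lemma cycNext_ne {n : ℕ} (hn : 3 ≤ n) (i : Fin n) : cycNext i ≠ i := by
  intro h
  have := congrArg Fin.val h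
  have := cycNext_val i
  omega

lemma cycNext_cycNext_ne {n : ℕ} (hn : 3 ≤ n) (i : Fin n) : cycNext (cycNext i) ≠ i := by
  intro h
  have := congrArg Fin.val h
  have := cycNext_val i
  have := cycNext_val (cycNext i)
  omega

lemma cycleG_adj {n : ℕ} (hn : 3 ≤ n) (i j : Fin n) :
    (cycleG n).Adj i j ↔ j = cycNext i ∨ i = cycNext j := by
  have h1 := cycNext_val i
  have h2 := cycNext_val j
  have hi := i.isLt
  have hj := j.isLt
  simp only [cycleG, SimpleGraph.fromRel_adj, Fin.ext_iff, ne_eq]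
  omega

lemma cartProd_adj {α β : Type*} (G : SimpleGraph α) (H : SimpleGraph β) (x y : α × β) :
    (cartProd G H).Adj x y ↔
      (x.1 = y.1 ∧ H.Adj x.2 y.2) ∨ (x.2 = y.2 ∧ G.Adj x.1 y.1) := by
  simp only [cartProd, SimpleGraph.fromRel_adj]
  constructor
  · rintro ⟨-, h | h⟩
    · exact h
    · exact h.imp (fun h => ⟨h.1.symm, h.2.symm⟩) (fun h => ⟨h.1.symm, h.2.symm⟩)
  · intro h
    refine ⟨?_, Or.inl h⟩
    rintro rfl
    simp at h

/-- Parametrization of the edges of `C_n □ G`: the edge leaving `(i, v)` along the cycle, and the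
copy of an edge of `G` over the cycle vertex `i`. -/
def prodEdge {V : Type*} (n : ℕ) (G : SimpleGraph V) :
    (V × Fin n) ⊕ (G.edgeSet × Fin n) → Sym2 (Fin n × V)
  | Sum.inl (v, i) => s((i, v), (cycNext i, v))
  | Sum.inr (e, i) => (e : Sym2 V).map fun v => (i, v)

lemma prodEdge_injective {V : Type*} {n : ℕ} (hn : 3 ≤ n) (G : SimpleGraph V) :
    Function.Injective (prodEdge n G) := by
  have hmix : ∀ (v : V) (i : Fin n) (e : Sym2 V) (j : Fin n),
      s((i, v), (cycNext i, v)) ≠ e.map fun v => (j, v) := by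
    intro v i e j h
    induction e using Sym2.ind with
    | _ x y =>
      have := cycNext_ne hn i
      rw [Sym2.map_mk, Sym2.eq_iff] at h
      simp only [Prod.mk.injEq] at h
      grind
  rintro (⟨v, i⟩ | ⟨e, i⟩) (⟨w, j⟩ | ⟨e', j⟩) h
  · have := cycNext_cycNext_ne hn j
    simp only [prodEdge, Sym2.eq_iff, Prod.mk.injEq] at h
    rcases h with h | h
    · rw [h.1.1, h.1.2]
    · exact absurd (by rw [← h.1.1]; exact h.2.1) this
  · exact absurd h (hmix _ _ _ _)
  · exact absurd h.symm (hmix _ _ _ _)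
  · have hij : i = j := by
      obtain ⟨e, he⟩ := e
      obtain ⟨e', he'⟩ := e'
      induction e using Sym2.ind with
      | _ x y =>
        induction e' using Sym2.ind with
        | _ x' y' =>
          simp only [prodEdge, Sym2.map_mk, Sym2.eq_iff, Prod.mk.injEq] at h
          tauto
    subst hij
    have : (e : Sym2 V) = e' := Sym2.map.injective (Prod.mk_right_injective i) h
    rw [Subtype.ext this]

lemma range_prodEdge {V : Type*} {n : ℕ} (hn : 3 ≤ n) (G : SimpleGraph V) :
    Set.range (prodEdge n G) = (cartProd (cycleG n) G).edgeSet := by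
  ext e
  constructor
  · rintro ⟨⟨v, i⟩ | ⟨⟨e, he⟩, i⟩, rfl⟩
    · simp [prodEdge, cartProd_adj, cycleG_adj hn]
    · induction e using Sym2.ind with
      | _ x y => simpa [prodEdge, cartProd_adj] using he
  · induction e using Sym2.ind with
    | _ x y =>
      obtain ⟨i, v⟩ := x
      obtain ⟨j, w⟩ := y
      intro h
      rw [SimpleGraph.mem_edgeSet, cartProd_adj, cycleG_adj hn] at h
      dsimp only at h
      rcases h with ⟨rfl, h⟩ | ⟨rfl, rfl | rfl⟩
      · exact ⟨Sum.inr (⟨s(v, w), h⟩, i), rfl⟩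
      · exact ⟨Sum.inl (v, i), rfl⟩
      · exact ⟨Sum.inl (v, j), Sym2.eq_swap⟩

/-- The labeling `(i, v) ↦ i + n * (index of v)` of `Fin n × V`, which is `i` modulo `n`. -/
lemma exists_labeling (n : ℕ) (V : Type*) [Fintype V] :
    ∃ f : Fin n × V ≃ Fin (Fintype.card (Fin n × V)),
      ∀ i v, ∃ k, ((f (i, v) : Fin _) : ℕ) = i + k * n := by
  refine ⟨(Equiv.prodComm _ _).trans (((Fintype.equivFin V).prodCongr (Equiv.refl _)).trans
    (finProdFinEquiv.trans (finCongr ?_))), fun i v => ⟨Fintype.equivFin V v, ?_⟩⟩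
  · simp [mul_comm]
  · simp [mul_comm]

/-- For `(a,b) ≠ (0,0)`, an odd prime `p ≡ ±1 (mod 8)` that is a
`0`-PL prime relative to `(a,b)`, `q ≥ 1`, and a connected graph `G`, the cartesian
product `C_{q·π_p(a,b)} □ G` is an `(a,b)`-FLC graph modulo `p`. -/
theorem cartProd_cycle_isFLCGraph (a b : ℤ) (hab : (a, b) ≠ (0, 0)) (p : ℕ)
    (hp : p.Prime) (hodd : Odd p) (hPL : IsPLPrime a b p 0)
    (h8 : p % 8 = 1 ∨ p % 8 = 7) (q : ℕ) (hq : 1 ≤ q)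
    {V : Type} [Fintype V] (G : SimpleGraph V) (hG : G.Connected) :
    IsFLCGraph (cartProd (cycleG (q * pisanoAB a b p)) G) a b p := by
  classical
  by_cases h0 : pisanoAB a b p = 0
  · -- The junk value `sInf ∅ = 0`: the vertex set is empty, so there are no edges.
    rw [h0, mul_zero]
    refine ⟨Fintype.equivFin _, ?_⟩
    have hempty : ∀ k (f : Fin 0 × V → ℕ), flcCount (cartProd (cycleG 0) G) a b p f k = 0 := by
      intro k f
      rw [flcCount, Set.eq_empty_of_isEmpty (Set.ofPred _), Set.ncard_empty]
    simp [hempty]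
  · have hn : 3 ≤ q * pisanoAB a b p :=
      (three_le_pisanoAB h0 hPL).trans (Nat.le_mul_of_pos_left _ hq)
    have hper : ∀ i, fibAB a b (i + q * pisanoAB a b p) ≡ fibAB a b i [ZMOD (p : ℤ)] :=
      fun i => fibAB_period_mul h0 i q
    have hsum := sum_labelSign_mul h0 hPL q
    have hperk : ∀ k i, fibAB a b (i + k * (q * pisanoAB a b p)) ≡ fibAB a b i [ZMOD (p : ℤ)] := by
      intro k i
      rw [← mul_assoc]
      exact fibAB_period_mul h0 i _
    generalize q * pisanoAB a b p = n at hn hper hsum hperk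
    obtain ⟨f, hf⟩ := exists_labeling n V
    have hF : ∀ i v, fibAB a b (f (i, v) : ℕ) ≡ fibAB a b i [ZMOD (p : ℤ)] := by
      intro i v
      obtain ⟨k, hk⟩ := hf i v
      rw [hk]
      exact hperk k i
    refine ⟨f, ?_⟩
    have hcount := flcCount_sub (cartProd (cycleG n) G) a b (p := p) (fun v => (f v : ℕ))
      (prodEdge n G) (prodEdge_injective hn G) (range_prodEdge hn G)
      (Sum.elim (fun z => labelSign p (fibAB a b (z.2 + 2)))
        (fun z => labelSign p (fibAB a b z.2))) ?_
    · have hshift : ∑ i : Fin n, labelSign p (fibAB a b ((i : ℕ) + 2)) = 0 := by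
        rw [Fin.sum_univ_eq_sum_range (fun i => labelSign p (fibAB a b (i + 2))) n,
          sum_range_add_of_periodic (fun i => labelSign p (fibAB a b i))
            (fun i => labelSign_congr (hper i)) 2, hsum]
      have hplain : ∑ i : Fin n, labelSign p (fibAB a b (i : ℕ)) = 0 := by
        rw [Fin.sum_univ_eq_sum_range (fun i => labelSign p (fibAB a b i)) n, hsum]
      rw [Fintype.sum_sum_type] at hcount
      simp only [Sum.elim_inl, Sum.elim_inr, Fintype.sum_prod_type, hshift, hplain,
        Finset.sum_const_zero, add_zero] at hcount
      rw [abs_sub_comm, hcount]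
      simp
    · -- It suffices to know the vertex sum on each edge up to the value of `labelSign`.
      have hlab : ∀ (x y : ℕ) (t : ℤ), labelSign p (fibAB a b x + fibAB a b y) = t →
          (flcEdgeLabel a b p s(x, y) = 1 ∧ t = 1) ∨
            (flcEdgeLabel a b p s(x, y) = 0 ∧ t = -1) := by
        rintro x y t rfl
        rw [flcEdgeLabel_mk a b hp, labelSign]
        split_ifs <;> simp
      rintro (⟨v, i⟩ | ⟨⟨e, he⟩, i⟩)
      · refine hlab _ _ _ (labelSign_congr ?_)
        have hnext : fibAB a b (cycNext i : ℕ) ≡ fibAB a b (i + 1) [ZMOD (p : ℤ)] := by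
          rcases cycNext_val i with ⟨-, h⟩ | ⟨h, h'⟩
          · rw [h]
          · rw [h', h]
            simpa using (hper 0).symm
        exact (hF i v).add ((hF _ v).trans hnext)
      · induction e using Sym2.ind with
        | _ x y =>
          refine hlab _ _ _ ((labelSign_congr ?_).trans (labelSign_two_mul hodd h8 _))
          rw [two_mul]
          exact (hF i x).add (hF i y)
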